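/- Let 1 < p < ∞, p* = max(p, p/(p−1)), and let H be a real Hilbert space. Let X = H × H, let Z = Option (H × H) with the extra point Δ (= none), and define φ : Z × X → Z by φ(Δ, d) = Δ and, for z = (x₁,x₂) and d = (d₁,d₂), φ(z,d) = Δ if |d₂| > |d₁| and φ(z,d) = (x₁+d₁, x₂+d₂) otherwise. Define f(Δ) = −∞, f(x₁,x₂) = |x₂|^p − (p*−1)^p |x₁|^p, and ũ(Δ) = −∞, ũ(x₁,x₂) = p (1 − 1/p*)^{p−1} (|x₂| − (p*−1)|x₁|) (|x₁| + |x₂|)^{p−1}. Then the minimal fixed point of A dominating f is A^∞f = u, where, for 1 < p ≤ 2: u(Δ) = −∞, u(x₁,x₂) = ũ(x₁,x₂) if |x₂| ≤ (p*−1)|x₁| and u(x₁,x₂) = f(x₁,x₂) if |x₂| > (p*−1)|x₁|; and for 2 ≤ p < ∞ the same formula with ũ and f interchanged (u = f on {|x₂| ≤ (p*−1)|x₁|}, u = ũ on {|x₂| > (p*−1)|x₁|}). -/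

import Mathlib

/-- An `EReal`-valued function on a real vector space is concave
(with the convention `⊤ + ⊥ = ⊥` of `EReal`). -/
def IsEConcave {X : Type*} [AddCommGroup X] [Module ℝ X] (ψ : X → EReal) : Prop :=
  ∀ x y : X, ∀ a b : ℝ, 0 ≤ a → 0 ≤ b → a + b = 1 →
    (a : EReal) * ψ x + (b : EReal) * ψ y ≤ ψ (a • x + b • y)

/-- The concave envelope `g^♯` of `g : X → EReal`: the pointwise infimum of all
concave functions dominating `g`. -/
noncomputable def concaveEnvelope {X : Type*} [AddCommGroup X] [Module ℝ X]
    (g : X → EReal) (x : X) : EReal :=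
  ⨅ ψ : {ψ : X → EReal // IsEConcave ψ ∧ ∀ y, g y ≤ ψ y}, ψ.1 x

/-- The operator `A`: `Ag(z) = (g ∘ φ(z,·))^♯(0)`. -/
noncomputable def Aop {X Z : Type*} [AddCommGroup X] [Module ℝ X]
    (φ : Z → X → Z) (g : Z → EReal) : Z → EReal :=
  fun z => concaveEnvelope (fun d => g (φ z d)) 0

/-- The update map for differentially subordinate martingales on the state space
`Z = (H × H) ∪ {Δ}` (with `Δ = none` a cemetery state): paths whose increment violates
`|d₂| ≤ |d₁|` are sent to `Δ`. -/
noncomputable def burkPhi {H : Type*} [NormedAddCommGroup H] [InnerProductSpace ℝ H] :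
    Option (H × H) → H × H → Option (H × H) :=
  fun z d => match z with
    | none => none
    | some w => if ‖d.2‖ > ‖d.1‖ then none else some (w.1 + d.1, w.2 + d.2)

/-!
`A^∞ f` lies below every majorant of `f` that has, at each point, an affine bound from above along
the increments `d` with `|d₂| ≤ |d₁|`, and is itself concave along the lines with `|d₁| = |d₂|`.
It therefore suffices that `u` has such affine bounds and lies below all majorants of `f` concave
along those lines.

All data depend only on the norms, and in the coordinates `(a, t) = ((p - 1)|x₁|, |x₂|)` for `2 ≤ p`
(for `p ≤ 2`, up to a negative factor, `((p - 1)|x₂|, |x₁|)`) both cases become the same statement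
about `t ^ p - a ^ p`, with the cone bounded by the diagonal.

Lower bound: a zigzag around the axis `a = 0` bounds the value there from below by the values of `f`
next to it and, `f` being homogeneous, by the value on the axis at a slightly larger scale. Letting
the step tend to `0` turns this into a bound on the axis, which one more line carries over to all
points off the cone.

Upper bound: along a line in `H` the norms, regularised to `√(|·|² + e)`, are smooth and positive,
and each of the two formulas has nonpositive second derivative where it is needed. The formulas meet
to first order on the diagonal, so `u` stays below its tangents; then `e` tends to `0`.
-/

open Set Filter Topology

section Envelope

variable {X : Type*} [AddCommGroup X] [Module ℝ X]

lemma isEConcave_bot : IsEConcave fun _ : X => (⊥ : EReal) := by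
  intro x y a b ha hb hab
  rcases hb.eq_or_lt with rfl | hb
  · obtain rfl : a = 1 := by linarith
    simp
  · simp [EReal.coe_mul_bot_of_pos hb]

lemma isEConcave_coe {h : X → ℝ} (hh : ConcaveOn ℝ univ h) :
    IsEConcave fun x => (h x : EReal) := by
  intro x y a b ha hb hab
  have hxy := hh.2 (mem_univ x) (mem_univ y) ha hb hab
  simp only [smul_eq_mul] at hxy
  beta_reduce
  exact_mod_cast hxy

lemma IsEConcave.iInf {ι : Sort*} {ψ : ι → X → EReal} (hψ : ∀ i, IsEConcave (ψ i)) :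
    IsEConcave fun x => ⨅ i, ψ i x := by
  intro x y a b ha hb hab
  refine le_iInf fun i => le_trans ?_ (hψ i x y a b ha hb hab)
  gcongr <;> exact iInf_le _ i

lemma IsEConcave.iSup_of_monotone {ψ : ℕ → X → EReal} (hψ : ∀ n, IsEConcave (ψ n))
    (hmono : Monotone ψ) : IsEConcave fun x => ⨆ n, ψ n x := by
  intro x y a b ha hb hab
  have hlim (c : ℝ) (w : X) :
      Tendsto (fun n => (c : EReal) * ψ n w) atTop (𝓝 (c * ⨆ n, ψ n w)) :=
    EReal.Tendsto.const_mul (tendsto_atTop_iSup fun m n hmn => hmono hmn w)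
      (Or.inl (EReal.coe_ne_bot c)) (Or.inl (EReal.coe_ne_top c))
  refine EReal.add_le_of_forall_lt fun s hs t ht => ?_
  obtain ⟨n, hsn, htn⟩ :=
    (((hlim a x).eventually_const_lt hs).and ((hlim b y).eventually_const_lt ht)).exists
  exact (add_le_add hsn.le htn.le).trans
    ((hψ n x y a b ha hb hab).trans (le_iSup (fun n => ψ n (a • x + b • y)) n))

lemma isEConcave_concaveEnvelope (g : X → EReal) : IsEConcave (concaveEnvelope g) :=
  IsEConcave.iInf fun ψ => ψ.2.1

lemma le_concaveEnvelope (g : X → EReal) : g ≤ concaveEnvelope g := fun x =>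
  le_iInf fun ψ => ψ.2.2 x

lemma concaveEnvelope_le {g ψ : X → EReal} (hψ : IsEConcave ψ) (hgψ : g ≤ ψ) :
    concaveEnvelope g ≤ ψ := fun x =>
  iInf_le (fun ψ : {ψ : X → EReal // IsEConcave ψ ∧ ∀ y, g y ≤ ψ y} => ψ.1 x) ⟨ψ, hψ, hgψ⟩

lemma concaveEnvelope_mono : Monotone (concaveEnvelope (X := X)) := fun _ g₂ hg =>
  concaveEnvelope_le (isEConcave_concaveEnvelope g₂) (hg.trans (le_concaveEnvelope g₂))

end Envelope

section Operator

variable {X Z : Type*} [AddCommGroup X] [Module ℝ X] {φ : Z → X → Z}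

lemma Aop_mono : Monotone (Aop φ) := fun _ _ hg z =>
  concaveEnvelope_mono (fun d => hg (φ z d)) 0

lemma le_Aop (hφ : ∀ z, φ z 0 = z) (g : Z → EReal) : g ≤ Aop φ g := fun z => by
  calc g z = g (φ z 0) := by rw [hφ]
    _ ≤ Aop φ g z := le_concaveEnvelope (fun d => g (φ z d)) 0

lemma mul_add_mul_le_Aop (g : Z → EReal) (z : Z) {d e : X} {a b : ℝ} (ha : 0 ≤ a) (hb : 0 ≤ b)
    (hab : a + b = 1) (hde : a • d + b • e = 0) :
    (a : EReal) * g (φ z d) + b * g (φ z e) ≤ Aop φ g z := by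
  have hconc := isEConcave_concaveEnvelope (fun d => g (φ z d)) d e a b ha hb hab
  rw [hde] at hconc
  refine le_trans ?_ hconc
  gcongr <;> exact le_concaveEnvelope (fun d => g (φ z d)) _

lemma iSup_iterate_Aop_le {f u : Z → EReal} (hfu : f ≤ u) (hu : Aop φ u ≤ u) :
    ⨆ n, (Aop φ)^[n] f ≤ u :=
  iSup_le fun n => (Aop_mono.iterate n hfu).trans
    (Aop_mono.antitone_iterate_of_map_le hu (Nat.zero_le n))

lemma Aop_iSup_iterate_le (hφ : ∀ z, φ z 0 = z) (f : Z → EReal) :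
    Aop φ (⨆ n, (Aop φ)^[n] f) ≤ ⨆ n, (Aop φ)^[n] f := by
  intro z
  set ψ : ℕ → X → EReal := fun n => concaveEnvelope fun d => (Aop φ)^[n] f (φ z d)
  have hψ_mono : Monotone ψ := fun m n hmn => concaveEnvelope_mono fun d =>
    Function.monotone_iterate_of_id_le (le_Aop hφ) hmn f (φ z d)
  have hψ_concave : IsEConcave fun d => ⨆ n, ψ n d :=
    IsEConcave.iSup_of_monotone (fun n => isEConcave_concaveEnvelope _) hψ_mono
  have hψ_ge : (fun d => (⨆ n, (Aop φ)^[n] f) (φ z d)) ≤ fun d => ⨆ n, ψ n d := fun d => by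
    simp only [iSup_apply]
    exact iSup_mono fun n => le_concaveEnvelope (fun d => (Aop φ)^[n] f (φ z d)) d
  calc Aop φ (⨆ n, (Aop φ)^[n] f) z ≤ ⨆ n, ψ n 0 := concaveEnvelope_le hψ_concave hψ_ge 0
    _ ≤ (⨆ n, (Aop φ)^[n] f) z := by
      rw [iSup_apply]
      refine iSup_le fun n => le_iSup_of_le (n + 1) ?_
      rw [Function.iterate_succ_apply']
      rfl

end Operator

section Zigzag

variable {E : Type*} [SeminormedAddCommGroup E] [NormedSpace ℝ E]

/-- Zigzag concavity: concavity along the lines on which the two coordinates of `E × E` move at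
equal speed. Real functions on `H × H` that dominate their image under `Aop burkPhi` have this
property. -/
def ZigzagConcave (V : E × E → ℝ) : Prop :=
  ∀ w d : E × E, ‖d.1‖ = ‖d.2‖ → ConcaveOn ℝ univ fun x : ℝ => V (w + x • d)

namespace ZigzagConcave

variable {V : E × E → ℝ}

lemma swap (hV : ZigzagConcave V) : ZigzagConcave fun w => V w.swap := fun w d hd =>
  hV w.swap d.swap hd.symm

lemma comp_smul (hV : ZigzagConcave V) {e₁ e₂ : E} (he₁ : ‖e₁‖ = 1) (he₂ : ‖e₂‖ = 1) :
    ZigzagConcave fun q : ℝ × ℝ => V (q.1 • e₁, q.2 • e₂) := fun w d hd => by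
  simpa only [Prod.fst_add, Prod.snd_add, Prod.smul_fst, Prod.smul_snd, smul_eq_mul, add_smul,
    mul_smul, Prod.smul_mk, Prod.mk_add_mk] using hV (w.1 • e₁, w.2 • e₂) (d.1 • e₁, d.2 • e₂)
      (by simp only [norm_smul, he₁, he₂, hd])

lemma two_point (hV : ZigzagConcave V) (w : E × E) {d : E × E} (hd : ‖d.1‖ = ‖d.2‖) {x y : ℝ}
    (hx : 0 ≤ x) (hy : 0 ≤ y) :
    y * V (w + x • d) + x * V (w - y • d) ≤ (x + y) * V w := by
  rcases (add_nonneg hx hy).eq_or_lt with hxy | hxy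
  · obtain rfl : x = 0 := by linarith
    obtain rfl : y = 0 := by linarith
    simp
  · have hconc := (hV w d hd).2 (mem_univ x) (mem_univ (-y)) (div_nonneg hy hxy.le)
      (div_nonneg hx hxy.le) (by field_simp; ring)
    have hmid : y / (x + y) * x + x / (x + y) * -y = 0 := by ring
    simp only [smul_eq_mul, hmid, zero_smul, add_zero, neg_smul, ← sub_eq_add_neg] at hconc
    calc y * V (w + x • d) + x * V (w - y • d)
        = (x + y) * (y / (x + y) * V (w + x • d) + x / (x + y) * V (w - y • d)) := by
          field_simp
      _ ≤ (x + y) * V w := mul_le_mul_of_nonneg_left hconc hxy.le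

end ZigzagConcave

end Zigzag

section StateSpace

variable {H : Type*} [NormedAddCommGroup H] [InnerProductSpace ℝ H]

lemma burkPhi_some_of_le (w : H × H) {d : H × H} (hd : ‖d.2‖ ≤ ‖d.1‖) :
    burkPhi (some w) d = some (w + d) := if_neg hd.not_gt

lemma burkPhi_zero (z : Option (H × H)) : burkPhi z 0 = z := by
  cases z with
  | none => rfl
  | some w => simpa using burkPhi_some_of_le w (d := 0) (by simp)

lemma zigzagConcave_of_Aop_le {g : Option (H × H) → EReal} {V : H × H → ℝ}
    (hgV : ∀ w, g (some w) = V w) (hg : Aop burkPhi g ≤ g) : ZigzagConcave V := by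
  refine fun w d hd => ⟨convex_univ, fun x _ y _ a b ha hb hab => ?_⟩
  set m := a * x + b * y with hm
  have hstep (c : ℝ) : g (burkPhi (some (w + m • d)) ((c - m) • d)) = V (w + c • d) := by
    rw [burkPhi_some_of_le _ (by simp [norm_smul, hd]), hgV, add_assoc, ← add_smul,
      add_sub_cancel]
  have hbalanced : a • ((x - m) • d) + b • ((y - m) • d) = 0 := by
    rw [smul_smul, smul_smul, ← add_smul,
      show a * (x - m) + b * (y - m) = 0 by linear_combination -m * hab - hm, zero_smul]
  have hmean := (mul_add_mul_le_Aop g (some (w + m • d)) ha hb hab hbalanced).trans (hg _)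
  rw [hstep, hstep, hgV] at hmean
  exact_mod_cast hmean

lemma Aop_burkPhi_le {u : Option (H × H) → EReal} {U : H × H → ℝ} (hu_none : u none = ⊥)
    (hu : ∀ w, u (some w) = U w)
    (hU : ∀ w, ∃ L : H × H →ₗ[ℝ] ℝ, ∀ d : H × H, ‖d.2‖ ≤ ‖d.1‖ → U (w + d) ≤ U w + L d) :
    Aop burkPhi u ≤ u := by
  rintro (_ | w)
  · exact (concaveEnvelope_le isEConcave_bot (fun _ => hu_none.le) 0).trans bot_le
  · obtain ⟨L, hL⟩ := hU w
    have hconc : ConcaveOn ℝ univ fun d => U w + L d :=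
      (concaveOn_const _ convex_univ).add (L.concaveOn convex_univ)
    refine (concaveEnvelope_le (isEConcave_coe hconc) (fun d => ?_) 0).trans ?_
    · by_cases hd : ‖d.2‖ ≤ ‖d.1‖
      · rw [burkPhi_some_of_le w hd, hu]
        exact EReal.coe_le_coe (hL d hd)
      · rw [show burkPhi (some w) d = none from if_pos (not_le.mp hd), hu_none]
        exact bot_le
    · simp [hu]

theorem iSup_iterate_Aop_burkPhi_eq {f u : Option (H × H) → EReal} {F U : H × H → ℝ}
    (hf_none : f none = ⊥) (hu_none : u none = ⊥)
    (hf : ∀ w, f (some w) = F w) (hu : ∀ w, u (some w) = U w) (hFU : F ≤ U)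
    (hsuper : ∀ w, ∃ L : H × H →ₗ[ℝ] ℝ, ∀ d : H × H, ‖d.2‖ ≤ ‖d.1‖ → U (w + d) ≤ U w + L d)
    (hleast : ∀ V : H × H → ℝ, F ≤ V → ZigzagConcave V → U ≤ V) :
    ⨆ n, (Aop burkPhi)^[n] f = u := by
  set S := ⨆ n, (Aop burkPhi)^[n] f
  have hfu : f ≤ u := by
    rintro (_ | w)
    · rw [hf_none]; exact bot_le
    · rw [hf, hu]; exact EReal.coe_le_coe (hFU w)
  have hSu : S ≤ u := iSup_iterate_Aop_le hfu (Aop_burkPhi_le hu_none hu hsuper)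
  have hfS : f ≤ S := le_iSup (fun n => (Aop burkPhi)^[n] f) 0
  have hS_real (w : H × H) : S (some w) = ((S (some w)).toReal : EReal) := by
    refine (EReal.coe_toReal (ne_top_of_le_ne_top ?_ (hSu (some w)))
      (ne_bot_of_le_ne_bot ?_ (hfS (some w)))).symm
    · rw [hu]; exact EReal.coe_ne_top _
    · rw [hf]; exact EReal.coe_ne_bot _
  have hUS := hleast (fun w => (S (some w)).toReal)
    (fun w => EReal.coe_le_coe_iff.mp (by rw [← hS_real, ← hf]; exact hfS _))
    (zigzagConcave_of_Aop_le hS_real (Aop_iSup_iterate_le burkPhi_zero f))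
  refine le_antisymm hSu ?_
  rintro (_ | w)
  · rw [hu_none]; exact bot_le
  · rw [hu, hS_real]; exact EReal.coe_le_coe (hUS w)

end StateSpace

namespace Burkholder

section Radial

/-- The common coordinate of the point where the line through `(a, t)` with direction `(p - 1, -1)`
crosses the diagonal. -/
noncomputable def contact (p a t : ℝ) : ℝ := (a + (p - 1) * t) / p

/-- The reward `f`, in the radial coordinates `a = (p - 1) ‖x₁‖`, `t = ‖x₂‖` for `2 ≤ p` and, up to
the factor `-(p - 1)⁻ᵖ`, in the coordinates `a = (p - 1) ‖x₂‖`, `t = ‖x₁‖` for `p ≤ 2`. -/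
noncomputable def gain (p a t : ℝ) : ℝ := t ^ p - a ^ p

/-- The function `ũ` in the radial coordinates of `gain`: on each line of direction `(p - 1, -1)`
it is the tangent of `gain` at the contact point. -/
noncomputable def majorant (p a t : ℝ) : ℝ := p * contact p a t ^ (p - 1) * (t - a)

/-- The function equal to `g` on the cone `t ≤ a` and to `h` off it. -/
noncomputable def glue (g h : ℝ → ℝ → ℝ) (a t : ℝ) : ℝ := if t ≤ a then g a t else h a t

/-- The function `u` in the radial coordinates of `gain`. -/
noncomputable def value (p : ℝ) : ℝ → ℝ → ℝ := glue (gain p) (majorant p)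

variable {p : ℝ} {a t c : ℝ}

lemma contact_self (hp : p ≠ 0) : contact p a a = a := by
  unfold contact; field_simp; ring

lemma contact_mul : contact p (c * a) (c * t) = c * contact p a t := by
  unfold contact; ring

lemma contact_nonneg (hp : 1 < p) (ha : 0 ≤ a) (ht : 0 ≤ t) : 0 ≤ contact p a t := by
  have : 0 < p - 1 := sub_pos.mpr hp
  unfold contact; positivity

lemma gain_self : gain p a a = 0 := sub_self _

lemma majorant_self : majorant p a a = 0 := by simp [majorant]

lemma value_of_le (h : t ≤ a) : value p a t = gain p a t := if_pos h

lemma value_of_ge (h : a ≤ t) : value p a t = majorant p a t := by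
  rcases h.eq_or_lt with rfl | h
  · rw [value_of_le le_rfl, gain_self, majorant_self]
  · exact if_neg h.not_ge

lemma gain_mul (hc : 0 ≤ c) (ha : 0 ≤ a) (ht : 0 ≤ t) :
    gain p (c * a) (c * t) = c ^ p * gain p a t := by
  simp only [gain, Real.mul_rpow hc ha, Real.mul_rpow hc ht]; ring

lemma majorant_mul (hp : 1 < p) (hc : 0 ≤ c) (ha : 0 ≤ a) (ht : 0 ≤ t) :
    majorant p (c * a) (c * t) = c ^ p * majorant p a t := by
  have hcp : c ^ p = c ^ (p - 1) * c := by
    rw [← Real.rpow_add_one' hc (by linarith), sub_add_cancel]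
  rw [majorant, contact_mul, Real.mul_rpow hc (contact_nonneg hp ha ht), hcp, majorant]
  ring

end Radial

section LowerBound

lemma nonneg_of_hasDerivAt_of_eventually_nonneg {f : ℝ → ℝ} {f' a : ℝ} (hf : HasDerivAt f f' a)
    (hfa : f a = 0) (hpos : ∀ᶠ x in 𝓝[>] a, 0 ≤ f x) : 0 ≤ f' := by
  have hslope := (hasDerivAt_iff_tendsto_slope.mp hf).mono_left (nhdsGT_le_nhdsNE a)
  refine ge_of_tendsto hslope ?_
  filter_upwards [hpos, self_mem_nhdsWithin] with x hx hax
  rw [slope_def_field, hfa, sub_zero]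
  exact div_nonneg hx (sub_nonneg.mpr (mem_Ioi.mp hax).le)

variable {p σ : ℝ} {W : ℝ × ℝ → ℝ}

lemma axis_step (hW : ZigzagConcave W) {r δ M : ℝ} (hδ : 0 ≤ δ) (hδr : δ ≤ r)
    (hM : M = 1 + 2 * δ) (c : ℝ) :
    δ * W (M * r * c, M * (1 - r) * c) + (r * M - δ) * W (0, M * c) +
      M * δ * W (-(r * c), (1 - r) * c) ≤ M * (r + δ) * W (0, c) := by
  have hr : 0 ≤ r := hδ.trans hδr
  have hM0 : 0 ≤ M := by linarith
  have hrM : 0 ≤ r * M - δ := by rw [hM]; nlinarith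
  have hup := hW.two_point (0, c) (d := (c, c)) rfl hδ hr
  have hdown := hW.two_point (δ * c, (1 + δ) * c) (d := (c, -c)) (norm_neg c).symm hrM hδ
  rw [show (0, c) + δ • (c, c) = (δ * c, (1 + δ) * c) by
      simp only [Prod.smul_mk, Prod.mk_add_mk, smul_eq_mul]; congr 1 <;> ring,
    show (0, c) - r • (c, c) = (-(r * c), (1 - r) * c) by
      simp only [Prod.smul_mk, Prod.mk_sub_mk, smul_eq_mul]; congr 1 <;> ring] at hup
  rw [show (δ * c, (1 + δ) * c) + (r * M - δ) • (c, -c) = (M * r * c, M * (1 - r) * c) by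
      simp only [hM, Prod.smul_mk, Prod.mk_add_mk, smul_eq_mul]; congr 1 <;> ring,
    show (δ * c, (1 + δ) * c) - δ • (c, -c) = (0, M * c) by
      simp only [hM, Prod.smul_mk, Prod.mk_sub_mk, smul_eq_mul]; congr 1 <;> ring] at hdown
  linear_combination M * hup + hdown

lemma rpow_mul_gain_le (hp : 1 < p) (hgain : ∀ s t, σ * gain p ((p - 1) * |s|) |t| ≤ W (s, t))
    {c : ℝ} (hc : 0 ≤ c) (s t : ℝ) :
    c ^ p * (σ * gain p ((p - 1) * |s|) |t|) ≤ W (c * s, c * t) := by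
  have : 0 ≤ p - 1 := by linarith
  have h := hgain (c * s) (c * t)
  rw [abs_mul, abs_mul, abs_of_nonneg hc, mul_left_comm,
    gain_mul hc (by positivity) (abs_nonneg t)] at h
  linarith

lemma gain_axis_step (hp : 1 < p) (hW : ZigzagConcave W)
    (hgain : ∀ s t, σ * gain p ((p - 1) * |s|) |t| ≤ W (s, t)) {r δ M c : ℝ} (hr1 : r ≤ 1)
    (hδ : 0 ≤ δ) (hδr : δ ≤ r) (hM : M = 1 + 2 * δ) (hc : 0 ≤ c) :
    c ^ p * (δ * (M ^ p + M) * (σ * gain p ((p - 1) * r) (1 - r))) + (r * M - δ) * W (0, M * c) ≤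
      M * (r + δ) * W (0, c) := by
  set g := σ * gain p ((p - 1) * r) (1 - r)
  have hr : 0 ≤ r := hδ.trans hδr
  have hM0 : 0 ≤ M := by linarith
  have hup : (M * c) ^ p * g ≤ W (M * r * c, M * (1 - r) * c) := by
    convert rpow_mul_gain_le hp hgain (mul_nonneg hM0 hc) r (1 - r) using 3 <;>
      first | rw [abs_of_nonneg hr, abs_of_nonneg (sub_nonneg.mpr hr1)] | ring
  have hdown : c ^ p * g ≤ W (-(r * c), (1 - r) * c) := by
    convert rpow_mul_gain_le hp hgain hc (-r) (1 - r) using 3 <;>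
      first | rw [abs_neg, abs_of_nonneg hr, abs_of_nonneg (sub_nonneg.mpr hr1)] | ring
  rw [Real.mul_rpow hM0 hc] at hup
  calc c ^ p * (δ * (M ^ p + M) * g) + (r * M - δ) * W (0, M * c)
      = δ * (M ^ p * c ^ p * g) + (r * M - δ) * W (0, M * c) + M * δ * (c ^ p * g) := by ring
    _ ≤ δ * W (M * r * c, M * (1 - r) * c) + (r * M - δ) * W (0, M * c) +
        M * δ * W (-(r * c), (1 - r) * c) := by gcongr
    _ ≤ M * (r + δ) * W (0, c) := axis_step hW hδ hδr hM c

lemma exists_axis_coeff (hp : 1 < p) (hW : ZigzagConcave W)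
    (hgain : ∀ s t, σ * gain p ((p - 1) * |s|) |t| ≤ W (s, t)) :
    ∃ K, (∀ c, 0 < c → c ^ p * K ≤ W (0, c)) ∧ ∀ r δ M, 0 < r → r ≤ 1 → 0 ≤ δ → δ ≤ r →
      M = 1 + 2 * δ → δ * (M ^ p + M) * (σ * gain p ((p - 1) * r) (1 - r)) +
        (r * M - δ) * M ^ p * K ≤ M * (r + δ) * K := by
  have hbdd : BddBelow (range fun c : Ioi (0 : ℝ) => W (0, c) / (c : ℝ) ^ p) := by
    refine ⟨σ * gain p ((p - 1) * |0|) |1|, ?_⟩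
    rintro _ ⟨⟨c, hc⟩, rfl⟩
    rw [le_div_iff₀ (Real.rpow_pos_of_pos hc p), mul_comm]
    simpa using rpow_mul_gain_le hp hgain (mem_Ioi.mp hc).le 0 1
  -- The infimum turns `gain_axis_step`, which relates two scales, into a relation on `K` alone.
  set K := ⨅ c : Ioi (0 : ℝ), W (0, c) / (c : ℝ) ^ p
  have hK (c : ℝ) (hc : 0 < c) : c ^ p * K ≤ W (0, c) := by
    rw [mul_comm, ← le_div_iff₀ (Real.rpow_pos_of_pos hc p)]
    exact ciInf_le hbdd ⟨c, hc⟩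
  refine ⟨K, hK, fun r δ M hr hr1 hδ hδr hM => ?_⟩
  have hM0 : 0 < M := by linarith
  have hrM : 0 ≤ r * M - δ := by rw [hM]; nlinarith
  have : Nonempty (Ioi (0 : ℝ)) := ⟨⟨1, mem_Ioi.mpr one_pos⟩⟩
  rw [← div_le_iff₀' (by positivity)]
  refine le_ciInf fun ⟨c, hc⟩ => ?_
  have hc0 : 0 < c := hc
  have hstep := gain_axis_step hp hW hgain hr1 hδ hδr hM hc0.le
  have haxis := mul_le_mul_of_nonneg_left (hK (M * c) (mul_pos hM0 hc0)) hrM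
  rw [Real.mul_rpow hM0.le hc0.le] at haxis
  rw [div_le_div_iff₀ (by positivity) (by positivity)]
  linear_combination hstep + haxis

lemma rpow_mul_gain_le_axis (hp : 1 < p) (hW : ZigzagConcave W)
    (hgain : ∀ s t, σ * gain p ((p - 1) * |s|) |t| ≤ W (s, t)) {r c : ℝ} (hr : 0 < r)
    (hpr : p * r ≤ 1) (hc : 0 < c) :
    c ^ p * (σ * gain p ((p - 1) * r) (1 - r)) ≤ (1 - p * r) * W (0, c) := by
  have hr1 : r ≤ 1 := by nlinarith
  obtain ⟨K, hK, hstep⟩ := exists_axis_coeff hp hW hgain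
  set g := σ * gain p ((p - 1) * r) (1 - r)
  have hder : HasDerivAt (fun δ => (1 + 2 * δ) * (r + δ) * K -
      (δ * ((1 + 2 * δ) ^ p + (1 + 2 * δ)) * g + (r * (1 + 2 * δ) - δ) * (1 + 2 * δ) ^ p * K))
      (2 * ((1 - p * r) * K - g)) 0 := by
    have hM : HasDerivAt (fun δ : ℝ => 1 + 2 * δ) 2 0 := by
      simpa using ((hasDerivAt_id (0 : ℝ)).const_mul 2).const_add 1
    have hMp := hM.rpow_const (p := p) (Or.inl (by norm_num))
    have hid := hasDerivAt_id' (0 : ℝ)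
    refine (((hM.mul (hid.const_add r)).mul_const K).sub (((hid.mul (hMp.add hM)).mul_const g).add
      ((((hM.const_mul r).sub hid).mul hMp).mul_const K))).congr_deriv ?_
    simp only [Pi.sub_apply, Pi.add_apply, mul_zero, add_zero, Real.one_rpow]
    ring
  have hKg := nonneg_of_hasDerivAt_of_eventually_nonneg hder (by simp) (by
    filter_upwards [Ioc_mem_nhdsGT hr] with δ hδ
    exact sub_nonneg.mpr (hstep r δ _ hr hr1 hδ.1.le hδ.2 rfl))
  calc c ^ p * g ≤ c ^ p * ((1 - p * r) * K) := by gcongr; linarith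
    _ = (1 - p * r) * (c ^ p * K) := by ring
    _ ≤ (1 - p * r) * W (0, c) :=
      mul_le_mul_of_nonneg_left (hK c hc) (sub_nonneg.mpr hpr)

lemma majorant_le_axis (hp : 1 < p) (hW : ZigzagConcave W)
    (hgain : ∀ s t, σ * gain p ((p - 1) * |s|) |t| ≤ W (s, t)) {c : ℝ} (hc : 0 < c) :
    σ * majorant p 0 c ≤ W (0, c) := by
  have hp0 : 0 < p := by linarith
  set τ := contact p 0 1 with hτ
  have hτ_eq : τ = 1 - 1 / p := by simp only [hτ, contact]; field_simp; ring
  have hτ_pos : 0 < τ := by rw [hτ_eq, sub_pos, div_lt_one hp0]; exact hp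
  have hder : HasDerivAt (fun δ => p * δ * W (0, c) - c ^ p * (σ *
      gain p (τ - (p - 1) * δ) (τ + δ))) (p * (W (0, c) - σ * majorant p 0 c)) 0 := by
    have hid := hasDerivAt_id' (0 : ℝ)
    have hup := (hid.const_add τ).rpow_const (p := p) (Or.inl (by simpa using hτ_pos.ne'))
    have hdown := ((hid.const_mul (p - 1)).const_sub τ).rpow_const (p := p)
      (Or.inl (by simpa using hτ_pos.ne'))
    have hmaj : majorant p 0 c = c ^ p * (p * τ ^ (p - 1)) := by
      simpa [majorant, hτ] using majorant_mul hp hc.le le_rfl zero_le_one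
    refine (((hid.const_mul p).mul_const (W (0, c))).sub
      (((hup.sub hdown).const_mul σ).const_mul (c ^ p))).congr_deriv ?_
    simp only [hmaj, mul_zero, add_zero, sub_zero]
    ring
  have hnonneg := nonneg_of_hasDerivAt_of_eventually_nonneg hder (by simp [gain_self]) (by
    filter_upwards [Ioo_mem_nhdsGT (one_div_pos.mpr hp0)] with δ hδ
    have hr : p * (1 / p - δ) = 1 - p * δ := by field_simp
    have h := rpow_mul_gain_le_axis hp hW hgain (r := 1 / p - δ) (sub_pos.mpr hδ.2)
      (by rw [hr]; linarith [mul_pos hp0 hδ.1]) hc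
    rw [hr, sub_sub_cancel, show (p - 1) * (1 / p - δ) = τ - (p - 1) * δ by
        rw [hτ_eq]; field_simp, show 1 - (1 / p - δ) = τ + δ by rw [hτ_eq]; ring] at h
    exact sub_nonneg.mpr h)
  linarith [nonneg_of_mul_nonneg_right hnonneg hp0]

lemma value_le_of_zigzagConcave (hp : 1 < p) (hW : ZigzagConcave W)
    (hgain : ∀ s t, σ * gain p ((p - 1) * |s|) |t| ≤ W (s, t)) {s t : ℝ} (hs : 0 ≤ s)
    (ht : 0 ≤ t) : σ * value p ((p - 1) * s) t ≤ W (s, t) := by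
  rcases le_or_gt t ((p - 1) * s) with h | h
  · simpa only [value_of_le h, abs_of_nonneg hs, abs_of_nonneg ht] using hgain s t
  have hp0 : 0 < p := by linarith
  have hst : 0 < s + t := by nlinarith
  set x := (s + t) / p - s with hx
  have hx0 : 0 ≤ x := by rw [hx, sub_nonneg, le_div_iff₀ hp0]; linarith
  have hdiag : 0 ≤ W ((s + t) / p, (p - 1) * ((s + t) / p)) := by
    have hdiag := hgain ((s + t) / p) ((p - 1) * ((s + t) / p))
    rwa [abs_mul, abs_of_pos (sub_pos.mpr hp), gain_self, mul_zero] at hdiag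
  have haxis := majorant_le_axis hp hW hgain hst
  have hline := hW.two_point (s, t) (d := (1, -1)) (by simp) hx0 hs
  rw [show (s, t) + x • ((1, -1) : ℝ × ℝ) = ((s + t) / p, (p - 1) * ((s + t) / p)) by
      simp only [hx, Prod.smul_mk, Prod.mk_add_mk, smul_eq_mul]; congr 1 <;> field_simp <;> ring,
    show (s, t) - s • ((1, -1) : ℝ × ℝ) = (0, s + t) by
      simp only [Prod.smul_mk, Prod.mk_sub_mk, smul_eq_mul]; congr 1 <;> ring] at hline
  have hmaj : x * majorant p 0 (s + t) = (s + t) / p * majorant p ((p - 1) * s) t := by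
    rw [majorant, majorant, show contact p 0 (s + t) = contact p ((p - 1) * s) t by
      unfold contact; ring, hx]
    field_simp
    ring
  rw [value_of_ge h.le]
  refine le_of_mul_le_mul_left ?_ (div_pos hst hp0)
  calc (s + t) / p * (σ * majorant p ((p - 1) * s) t) = x * (σ * majorant p 0 (s + t)) := by
        linear_combination -σ * hmaj
    _ ≤ x * W (0, s + t) := mul_le_mul_of_nonneg_left haxis hx0
    _ ≤ s * W ((s + t) / p, (p - 1) * ((s + t) / p)) + x * W (0, s + t) :=
      le_add_of_nonneg_left (mul_nonneg hs hdiag)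
    _ ≤ (x + s) * W (s, t) := hline
    _ = (s + t) / p * W (s, t) := by rw [hx, sub_add_cancel]

lemma exists_unit_smul_eq {H : Type*} [NormedAddCommGroup H] [NormedSpace ℝ H] [Nontrivial H]
    (x : H) : ∃ e : H, ‖e‖ = 1 ∧ ‖x‖ • e = x := by
  rcases eq_or_ne x 0 with rfl | hx
  · obtain ⟨e, he⟩ := exists_norm_eq H zero_le_one
    exact ⟨e, he, by simp⟩
  · have hx' : ‖x‖ ≠ 0 := norm_ne_zero_iff.mpr hx
    exact ⟨‖x‖⁻¹ • x, by simp [norm_smul, hx'], smul_inv_smul₀ hx' x⟩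

theorem value_norm_le_of_zigzagConcave {H : Type*} [NormedAddCommGroup H] [NormedSpace ℝ H]
    (hp : 1 < p) {V : H × H → ℝ} (hV : ZigzagConcave V)
    (hgain : ∀ w : H × H, σ * gain p ((p - 1) * ‖w.1‖) ‖w.2‖ ≤ V w) (w : H × H) :
    σ * value p ((p - 1) * ‖w.1‖) ‖w.2‖ ≤ V w := by
  rcases subsingleton_or_nontrivial H with _ | _
  · have hw := hgain w
    rw [Subsingleton.elim w.1 0, Subsingleton.elim w.2 0, norm_zero, mul_zero] at hw ⊢
    rwa [value_of_le le_rfl]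
  · obtain ⟨e₁, he₁, hw₁⟩ := exists_unit_smul_eq w.1
    obtain ⟨e₂, he₂, hw₂⟩ := exists_unit_smul_eq w.2
    have hplane := value_le_of_zigzagConcave hp (hV.comp_smul he₁ he₂)
      (fun s t => by simpa [norm_smul, he₁, he₂] using hgain (s • e₁, t • e₂))
      (norm_nonneg w.1) (norm_nonneg w.2)
    rwa [hw₁, hw₂] at hplane

end LowerBound

section Comparison

variable {p σ : ℝ} {a t : ℝ}

lemma continuous_gain (hp : 0 ≤ p) : Continuous fun q : ℝ × ℝ => gain p q.1 q.2 :=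
  (continuous_snd.rpow_const fun _ => Or.inr hp).sub
    (continuous_fst.rpow_const fun _ => Or.inr hp)

lemma continuous_majorant (hp : 1 ≤ p) : Continuous fun q : ℝ × ℝ => majorant p q.1 q.2 := by
  have hcontact : Continuous fun q : ℝ × ℝ => contact p q.1 q.2 := by
    unfold contact; fun_prop
  exact (continuous_const.mul (hcontact.rpow_const fun _ => Or.inr (sub_nonneg.mpr hp))).mul
    (continuous_snd.sub continuous_fst)

lemma contact_pos (hp : 1 < p) (ha : 0 ≤ a) (ht : 0 ≤ t) (hat : 0 < a ∨ 0 < t) :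
    0 < contact p a t := by
  have : 0 < p - 1 := sub_pos.mpr hp
  unfold contact
  rcases hat with h | h <;> positivity

lemma le_contact_iff (hp : 1 < p) : a ≤ contact p a t ↔ a ≤ t := by
  rw [contact, le_div_iff₀ (by linarith)]
  constructor <;> intro h <;> nlinarith

lemma contact_le_iff (hp : 1 < p) : contact p a t ≤ a ↔ t ≤ a := by
  rw [contact, div_le_iff₀ (by linarith)]
  constructor <;> intro h <;> nlinarith

lemma mul_rpow_sub_two_mono (hσ : 0 ≤ σ * (p - 2)) {x y : ℝ} (hx : 0 < x) (hxy : x ≤ y) :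
    σ * x ^ (p - 2) ≤ σ * y ^ (p - 2) := by
  rcases mul_nonneg_iff.mp hσ with ⟨hσ0, hp⟩ | ⟨hσ0, hp⟩
  · exact mul_le_mul_of_nonneg_left (Real.rpow_le_rpow hx.le hxy hp) hσ0
  · exact mul_le_mul_of_nonpos_left (Real.rpow_le_rpow_of_nonpos hx hxy hp) hσ0

lemma rpow_sub_one_eq (ha : 0 < a) : a ^ (p - 1) = a ^ (p - 2) * a := by
  rw [← Real.rpow_add_one ha.ne']; ring_nf

lemma hasDerivAt_majorant_sub_gain (hp : 1 < p) (ha : 0 < a) (ht : 0 ≤ t) :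
    HasDerivAt (fun a => majorant p a t - gain p a t)
      (p * a * (a ^ (p - 2) - contact p a t ^ (p - 2))) a := by
  have hτ : 0 < contact p a t := contact_pos hp ha.le ht (Or.inl ha)
  have hid := hasDerivAt_id' a
  have hτ' : HasDerivAt (fun a => contact p a t) (1 / p) a :=
    (hid.add_const ((p - 1) * t)).div_const p
  refine ((((hτ'.rpow_const (p := p - 1) (Or.inl hτ.ne')).const_mul p).mul
    (hid.const_sub t)).sub ((hid.rpow_const (p := p) (Or.inl ha.ne')).const_sub _)).congr_deriv ?_
  rw [show p - 1 - 1 = p - 2 by ring, rpow_sub_one_eq ha, rpow_sub_one_eq hτ]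
  generalize contact p a t ^ (p - 2) = T
  unfold contact
  field_simp
  ring

lemma mul_gain_le_mul_majorant (hp : 1 < p) (hσ : 0 ≤ σ * (p - 2)) (ha : 0 ≤ a) (ht : 0 ≤ t) :
    σ * gain p a t ≤ σ * majorant p a t := by
  set D : ℝ → ℝ := fun x => σ * (majorant p x t - gain p x t) with hD
  set D' : ℝ → ℝ := fun x => p * x * (σ * x ^ (p - 2) - σ * contact p x t ^ (p - 2)) with hD'
  have hDt : D t = 0 := by simp [hD, majorant_self, gain_self]
  have hcont : Continuous D := continuous_const.mul
    (((continuous_majorant hp.le).comp (.prodMk_left t)).sub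
      ((continuous_gain (by linarith)).comp (.prodMk_left t)))
  have hder (x : ℝ) (hx : 0 < x) : HasDerivAt D (D' x) x :=
    ((hasDerivAt_majorant_sub_gain hp hx ht).const_mul σ).congr_deriv (by simp only [hD']; ring)
  suffices h : 0 ≤ D a by simp only [hD] at h; linarith
  rw [← hDt]
  rcases le_total a t with hat | hta
  · have hanti : AntitoneOn D (Icc a t) := by
      refine antitoneOn_of_hasDerivWithinAt_nonpos (f' := D') (convex_Icc a t) hcont.continuousOn
        (fun x hx => ?_) (fun x hx => ?_) <;> rw [interior_Icc] at hx
      · exact (hder x (ha.trans_lt hx.1)).hasDerivWithinAt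
      · have hx0 : 0 < x := ha.trans_lt hx.1
        exact mul_nonpos_of_nonneg_of_nonpos (by positivity)
          (sub_nonpos.mpr (mul_rpow_sub_two_mono hσ hx0 ((le_contact_iff hp).mpr hx.2.le)))
    exact hanti (left_mem_Icc.mpr hat) (right_mem_Icc.mpr hat) hat
  · have hmono : MonotoneOn D (Icc t a) := by
      refine monotoneOn_of_hasDerivWithinAt_nonneg (f' := D') (convex_Icc t a) hcont.continuousOn
        (fun x hx => ?_) (fun x hx => ?_) <;> rw [interior_Icc] at hx
      · exact (hder x (ht.trans_lt hx.1)).hasDerivWithinAt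
      · have hx0 : 0 < x := ht.trans_lt hx.1
        exact mul_nonneg (by positivity) (sub_nonneg.mpr (mul_rpow_sub_two_mono hσ
          (contact_pos hp hx0.le ht (Or.inl hx0)) ((contact_le_iff hp).mpr hx.1.le)))
    exact hmono (left_mem_Icc.mpr hta) (right_mem_Icc.mpr hta) hta

lemma mul_gain_le_mul_value (hp : 1 < p) (hσ : 0 ≤ σ * (p - 2)) (ha : 0 ≤ a) (ht : 0 ≤ t) :
    σ * gain p a t ≤ σ * value p a t := by
  rcases le_total t a with h | h
  · rw [value_of_le h]
  · rw [value_of_ge h]; exact mul_gain_le_mul_majorant hp hσ ha ht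

lemma mul_value_le_mul_majorant (hp : 1 < p) (hσ : 0 ≤ σ * (p - 2)) (ha : 0 ≤ a) (ht : 0 ≤ t) :
    σ * value p a t ≤ σ * majorant p a t := by
  rcases le_total t a with h | h
  · rw [value_of_le h]; exact mul_gain_le_mul_majorant hp hσ ha ht
  · rw [value_of_ge h]

end Comparison

section Curves

/-- A regularised radial motion `a = √(‖X + x h‖² + e)`, abstracted to what the second derivative
test needs: `a²` has derivative `2 (m + H x)`, where `m = ⟪X, h⟫` and `H = ‖h‖²`, and `a` has speed
at most `‖h‖`. -/
structure IsRadialCurve (a : ℝ → ℝ) (m H : ℝ) : Prop where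
  pos : ∀ x, 0 < a x
  hasDerivAt : ∀ x, HasDerivAt a ((m + H * x) / a x) x
  sq_speed_le : ∀ x, ((m + H * x) / a x) ^ 2 ≤ H

/-- Derivative of `gain p` at `(a, t)` in terms of `m = a a'` and `n = t t'`. -/
noncomputable def gainSlope (p m n a t : ℝ) : ℝ := p * (t ^ (p - 2) * n - a ^ (p - 2) * m)

/-- Derivative of `majorant p` at `(a, t)` in terms of `m = a a'` and `n = t t'`. -/
noncomputable def majorantSlope (p m n a t : ℝ) : ℝ :=
  p * contact p a t ^ (p - 2) * (((p - 1) - (p - 2) * (a / t)) * n - m)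

/-- Derivative of `value p` at `(a, t)` in terms of `m = a a'` and `n = t t'`. -/
noncomputable def valueSlope (p m n : ℝ) : ℝ → ℝ → ℝ :=
  glue (gainSlope p m n) (majorantSlope p m n)

variable {p σ : ℝ} {a t : ℝ → ℝ} {m n H K x : ℝ}

lemma majorantSlope_self (hp : p ≠ 0) {b : ℝ} (hb : b ≠ 0) :
    majorantSlope p m n b b = gainSlope p m n b b := by
  rw [majorantSlope, contact_self hp, div_self hb, gainSlope]; ring

namespace IsRadialCurve

lemma hasDerivAt_gain (ha : IsRadialCurve a m H) (ht : IsRadialCurve t n K) (x : ℝ) :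
    HasDerivAt (fun x => gain p (a x) (t x))
      (gainSlope p (m + H * x) (n + K * x) (a x) (t x)) x := by
  have ha0 := ha.pos x
  have ht0 := ht.pos x
  refine (((ht.hasDerivAt x).rpow_const (p := p) (Or.inl ht0.ne')).sub
    ((ha.hasDerivAt x).rpow_const (p := p) (Or.inl ha0.ne'))).congr_deriv ?_
  rw [rpow_sub_one_eq ha0, rpow_sub_one_eq ht0, gainSlope]
  field_simp

lemma hasDerivAt_rpow_mul (ha : IsRadialCurve a m H) (x : ℝ) :
    HasDerivAt (fun x => a x ^ (p - 2) * (m + H * x))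
      (a x ^ (p - 2) * (H + (p - 2) * ((m + H * x) / a x) ^ 2)) x := by
  have ha0 := ha.pos x
  have hm : HasDerivAt (fun x => m + H * x) H x := by
    simpa using ((hasDerivAt_id x).const_mul H).const_add m
  refine (((ha.hasDerivAt x).rpow_const (p := p - 2) (Or.inl ha0.ne')).mul hm).congr_deriv ?_
  rw [Real.rpow_sub_one ha0.ne']
  field_simp
  ring

lemma hasDerivAt_gainSlope (ha : IsRadialCurve a m H) (ht : IsRadialCurve t n K) (x : ℝ) :
    HasDerivAt (fun x => gainSlope p (m + H * x) (n + K * x) (a x) (t x))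
      (p * (t x ^ (p - 2) * (K + (p - 2) * ((n + K * x) / t x) ^ 2) -
        a x ^ (p - 2) * (H + (p - 2) * ((m + H * x) / a x) ^ 2))) x :=
  ((ht.hasDerivAt_rpow_mul x).sub (ha.hasDerivAt_rpow_mul x)).const_mul p

lemma hasDerivAt_contact (ha : IsRadialCurve a m H) (ht : IsRadialCurve t n K) (x : ℝ) :
    HasDerivAt (fun x => contact p (a x) (t x))
      (contact p ((m + H * x) / a x) ((n + K * x) / t x)) x :=
  ((ha.hasDerivAt x).add ((ht.hasDerivAt x).const_mul (p - 1))).div_const p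

lemma hasDerivAt_majorant (hp : 1 < p) (ha : IsRadialCurve a m H) (ht : IsRadialCurve t n K)
    (x : ℝ) : HasDerivAt (fun x => majorant p (a x) (t x))
      (majorantSlope p (m + H * x) (n + K * x) (a x) (t x)) x := by
  have ha0 := ha.pos x
  have ht0 := ht.pos x
  have hτ0 : 0 < contact p (a x) (t x) := contact_pos hp ha0.le ht0.le (Or.inl ha0)
  refine ((((ha.hasDerivAt_contact ht x).rpow_const (p := p - 1) (Or.inl hτ0.ne')).const_mul
    p).mul ((ht.hasDerivAt x).sub (ha.hasDerivAt x))).congr_deriv ?_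
  rw [show p - 1 - 1 = p - 2 by ring, rpow_sub_one_eq hτ0, majorantSlope]
  generalize contact p (a x) (t x) ^ (p - 2) = T
  simp only [Pi.sub_apply, contact]
  field_simp
  ring

lemma hasDerivAt_majorantSlope (hp : 1 < p) (ha : IsRadialCurve a m H) (ht : IsRadialCurve t n K)
    {A b : ℝ} (hA : A = (m + H * x) / a x) (hb : b = (n + K * x) / t x) :
    HasDerivAt (fun x => majorantSlope p (m + H * x) (n + K * x) (a x) (t x))
      (contact p (a x) (t x) ^ (p - 3) *
        ((a x + (p - 1) * t x) * ((p - 1) * (K + (p - 2) * b ^ 2) - H) -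
          (p - 2) * (a x * (A + (p - 1) * b) ^ 2 +
            (a x + (p - 1) * t x) * (a x / t x * (K - b ^ 2))))) x := by
  have ha0 := ha.pos x
  have ht0 := ht.pos x
  have hτ0 : 0 < contact p (a x) (t x) := contact_pos hp ha0.le ht0.le (Or.inl ha0)
  have hm : HasDerivAt (fun x => m + H * x) H x := by
    simpa using ((hasDerivAt_id x).const_mul H).const_add m
  have hn : HasDerivAt (fun x => n + K * x) K x := by
    simpa using ((hasDerivAt_id x).const_mul K).const_add n
  have hmA : m + H * x = A * a x := by rw [hA]; field_simp
  have hnb : n + K * x = b * t x := by rw [hb]; field_simp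
  refine ((((ha.hasDerivAt_contact ht x).rpow_const (p := p - 2) (Or.inl hτ0.ne')).const_mul
    p).mul (((((ha.hasDerivAt x).div (ht.hasDerivAt x) ht0.ne').const_mul (p - 2)).const_sub
      (p - 1)).mul hn |>.sub hm)).congr_deriv ?_
  rw [show p - 2 - 1 = p - 3 by ring, show contact p (a x) (t x) ^ (p - 2) =
    contact p (a x) (t x) ^ (p - 3) * contact p (a x) (t x) by
      rw [← Real.rpow_add_one hτ0.ne']; ring_nf]
  generalize contact p (a x) (t x) ^ (p - 3) = T
  rw [← hA, ← hb]
  simp only [Pi.sub_apply, Pi.mul_apply, Pi.div_apply, contact, hmA, hnb]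
  field_simp
  ring

end IsRadialCurve

lemma curvature_nonneg (hp : 1 < p) {b : ℝ} (hb : b ^ 2 ≤ K) : 0 ≤ K + (p - 2) * b ^ 2 := by
  nlinarith [sq_nonneg b]

lemma mul_curvature_le (hσ : 0 ≤ σ * (p - 2)) {b : ℝ} (hb : b ^ 2 ≤ K) :
    σ * (K + (p - 2) * b ^ 2) ≤ σ * ((p - 1) * K) := by
  nlinarith [mul_nonneg hσ (sub_nonneg.mpr hb)]

lemma mul_gain_second_deriv_nonpos (hp : 1 < p) (hσ : 0 ≤ σ * (p - 2))
    (hHK : σ * ((p - 1) ^ 2 * K) ≤ σ * H) {α τ A b : ℝ} (hτ : 0 < τ) (hτα : τ ≤ α)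
    (hb : b ^ 2 ≤ K) :
    σ * (p * (τ ^ (p - 2) * (K + (p - 2) * b ^ 2) - α ^ (p - 2) * (H + (p - 2) * A ^ 2))) ≤ 0 := by
  have hK : 0 ≤ K := (sq_nonneg b).trans hb
  have hp1 : 0 ≤ p - 1 := by linarith
  have hα : 0 < α := hτ.trans_le hτα
  have hpow : σ * τ ^ (p - 2) - σ * α ^ (p - 2) ≤ 0 :=
    sub_nonpos.mpr (mul_rpow_sub_two_mono hσ hτ hτα)
  have hcurv : σ * ((K + (p - 2) * b ^ 2) - (H + (p - 2) * A ^ 2)) ≤ 0 := by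
    linarith [mul_curvature_le hσ hb, mul_nonneg (mul_nonneg hσ hp1) hK,
      mul_nonneg hσ (sq_nonneg A)]
  calc _ = p * ((K + (p - 2) * b ^ 2) * (σ * τ ^ (p - 2) - σ * α ^ (p - 2)) +
        α ^ (p - 2) * (σ * ((K + (p - 2) * b ^ 2) - (H + (p - 2) * A ^ 2)))) := by ring
    _ ≤ 0 := mul_nonpos_of_nonneg_of_nonpos (by linarith) (add_nonpos
      (mul_nonpos_of_nonneg_of_nonpos (curvature_nonneg hp hb) hpow)
      (mul_nonpos_of_nonneg_of_nonpos (by positivity) hcurv))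

lemma mul_majorant_second_deriv_nonpos (hp : 1 < p) (hσ : 0 ≤ σ * (p - 2))
    (hHK : σ * ((p - 1) ^ 2 * K) ≤ σ * H) {α τ A b T : ℝ} (hT : 0 ≤ T) (hα : 0 ≤ α) (hτ : 0 ≤ τ)
    (hb : b ^ 2 ≤ K) :
    σ * (T * ((α + (p - 1) * τ) * ((p - 1) * (K + (p - 2) * b ^ 2) - H) -
      (p - 2) * (α * (A + (p - 1) * b) ^ 2 +
        (α + (p - 1) * τ) * (α / τ * (K - b ^ 2))))) ≤ 0 := by
  have hp1 : 0 ≤ p - 1 := by linarith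
  have hr : 0 ≤ α + (p - 1) * τ := by positivity
  have hcurv : σ * ((p - 1) * (K + (p - 2) * b ^ 2) - H) ≤ 0 := by
    linarith [mul_le_mul_of_nonneg_left (mul_curvature_le hσ hb) hp1]
  have hrest : 0 ≤ α * (A + (p - 1) * b) ^ 2 + (α + (p - 1) * τ) * (α / τ * (K - b ^ 2)) := by
    have := sub_nonneg.mpr hb
    positivity
  linarith [mul_nonpos_of_nonneg_of_nonpos hT (mul_nonpos_of_nonneg_of_nonpos hr hcurv),
    mul_nonneg hT (mul_nonneg hσ hrest)]

lemma tangent_bound {g g' g'' : ℝ → ℝ} {y z : ℝ} (hyz : y ≤ z) (hg : ∀ x, HasDerivAt g (g' x) x)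
    (hg' : ∀ x, HasDerivAt g' (g'' x) x) (hg'' : ∀ x ∈ Icc y z, g'' x ≤ 0) :
    g' z ≤ g' y ∧ g z ≤ g y + g' y * (z - y) := by
  have hanti : AntitoneOn g' (Icc y z) :=
    antitoneOn_of_hasDerivWithinAt_nonpos (convex_Icc y z)
      (fun x _ => (hg' x).continuousAt.continuousWithinAt)
      (fun x _ => (hg' x).hasDerivWithinAt) fun x hx => hg'' x (interior_subset hx)
  have hy := left_mem_Icc.mpr hyz
  refine ⟨hanti hy (right_mem_Icc.mpr hyz) hyz, ?_⟩
  have := (convex_Icc y z).image_sub_le_mul_sub_of_deriv_le (f := g) (C := g' y)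
    (fun x _ => (hg x).continuousAt.continuousWithinAt)
    (fun x _ => (hg x).differentiableAt.differentiableWithinAt)
    (fun x hx => (hg x).deriv.trans_le (hanti hy (interior_subset hx) (interior_subset hx).1))
    y hy z (right_mem_Icc.mpr hyz) hyz
  linarith

lemma exists_first_exit {ρ : ℝ → ℝ} (hρ : Continuous ρ) (h0 : ρ 0 ≤ 0) :
    ∃ y ∈ Icc (0 : ℝ) 1, (∀ x ∈ Icc 0 y, ρ x ≤ 0) ∧ (y = 1 ∨ ρ y = 0) := by
  by_cases hstay : ∀ x ∈ Icc (0 : ℝ) 1, ρ x ≤ 0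
  · exact ⟨1, right_mem_Icc.mpr zero_le_one, hstay, Or.inl rfl⟩
  push Not at hstay
  obtain ⟨x₁, hx₁, hρx₁⟩ := hstay
  have hzero : (Icc (0 : ℝ) 1 ∩ {x | 0 ≤ ρ x}).Nonempty := ⟨x₁, hx₁, hρx₁.le⟩
  obtain ⟨y, ⟨hy, hρy⟩, hleast⟩ := (isCompact_Icc.inter_right
    (isClosed_le continuous_const hρ)).exists_isLeast hzero
  have hbefore : ∀ x ∈ Ico 0 y, ρ x < 0 := fun x hx =>
    not_le.mp fun h => (hleast ⟨⟨hx.1, hx.2.le.trans hy.2⟩, h⟩).not_gt hx.2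
  have hy0 : ρ y ≤ 0 := by
    rcases hy.1.eq_or_lt with rfl | hpos
    · exact h0
    · refine (isClosed_le hρ continuous_const).closure_subset_iff.mpr
        (fun x hx => (hbefore x hx).le) ?_
      rw [closure_Ico hpos.ne]
      exact right_mem_Icc.mpr hpos.le
  exact ⟨y, hy, fun x hx => hx.2.eq_or_lt.elim (fun h => h ▸ hy0) fun h => (hbefore x ⟨hx.1, h⟩).le,
    Or.inr (hy0.antisymm hρy)⟩

namespace IsRadialCurve

lemma mul_gain_tangent (hp : 1 < p) (hσ : 0 ≤ σ * (p - 2)) (ha : IsRadialCurve a m H)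
    (ht : IsRadialCurve t n K) (hHK : σ * ((p - 1) ^ 2 * K) ≤ σ * H) {y : ℝ} (hy : 0 ≤ y)
    (hcone : ∀ x ∈ Icc 0 y, t x ≤ a x) :
    σ * gainSlope p (m + H * y) (n + K * y) (a y) (t y) ≤ σ * gainSlope p m n (a 0) (t 0) ∧
      σ * gain p (a y) (t y) ≤
        σ * gain p (a 0) (t 0) + σ * gainSlope p m n (a 0) (t 0) * y := by
  simpa using tangent_bound hy (fun x => (ha.hasDerivAt_gain ht x).const_mul σ)
    (fun x => (ha.hasDerivAt_gainSlope ht x).const_mul σ) fun x hx =>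
      mul_gain_second_deriv_nonpos hp hσ hHK (ht.pos x) (hcone x hx) (ht.sq_speed_le x)

lemma mul_majorant_tangent (hp : 1 < p) (hσ : 0 ≤ σ * (p - 2)) (ha : IsRadialCurve a m H)
    (ht : IsRadialCurve t n K) (hHK : σ * ((p - 1) ^ 2 * K) ≤ σ * H) {y z : ℝ} (hyz : y ≤ z) :
    σ * majorant p (a z) (t z) ≤ σ * majorant p (a y) (t y) +
      σ * majorantSlope p (m + H * y) (n + K * y) (a y) (t y) * (z - y) :=
  (tangent_bound hyz (fun x => (ha.hasDerivAt_majorant hp ht x).const_mul σ)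
    (fun _ => (ha.hasDerivAt_majorantSlope hp ht rfl rfl).const_mul σ) fun x _ =>
      mul_majorant_second_deriv_nonpos hp hσ hHK
        (Real.rpow_nonneg (contact_nonneg hp (ha.pos x).le (ht.pos x).le) _) (ha.pos x).le
        (ht.pos x).le (ht.sq_speed_le x)).2

lemma mul_value_le (hp : 1 < p) (hσ : 0 ≤ σ * (p - 2)) (ha : IsRadialCurve a m H)
    (ht : IsRadialCurve t n K) (hHK : σ * ((p - 1) ^ 2 * K) ≤ σ * H) :
    σ * value p (a 1) (t 1) ≤
      σ * value p (a 0) (t 0) + σ * valueSlope p m n (a 0) (t 0) := by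
  have hle_majorant : σ * value p (a 1) (t 1) ≤ σ * majorant p (a 1) (t 1) :=
    mul_value_le_mul_majorant hp hσ (ha.pos 1).le (ht.pos 1).le
  rcases le_or_gt (t 0) (a 0) with hin | hout
  · rw [value_of_le hin, valueSlope, glue, if_pos hin]
    obtain ⟨y, hy, hcone, hexit⟩ := exists_first_exit (ρ := fun x => t x - a x)
      ((continuous_iff_continuousAt.mpr fun x => (ht.hasDerivAt x).continuousAt).sub
        (continuous_iff_continuousAt.mpr fun x => (ha.hasDerivAt x).continuousAt))
      (sub_nonpos.mpr hin)
    obtain ⟨hslope, hgain⟩ := ha.mul_gain_tangent hp hσ ht hHK hy.1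
      fun x hx => sub_nonpos.mp (hcone x hx)
    rcases hexit with rfl | hexit
    · rw [value_of_le (sub_nonpos.mp (hcone 1 (right_mem_Icc.mpr zero_le_one)))]
      simpa only [mul_one] using hgain
    · have htangent := ha.mul_majorant_tangent hp hσ ht hHK hy.2
      rw [sub_eq_zero.mp hexit, majorant_self, majorantSlope_self (by linarith) (ha.pos y).ne']
        at htangent
      rw [sub_eq_zero.mp hexit, gain_self] at hgain
      rw [sub_eq_zero.mp hexit] at hslope
      linarith [mul_le_mul_of_nonneg_right hslope (sub_nonneg.mpr hy.2)]
  · have htangent := ha.mul_majorant_tangent hp hσ ht hHK zero_le_one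
    rw [value_of_ge hout.le, valueSlope, glue, if_neg hout.not_ge]
    simp only [mul_zero, add_zero, sub_zero, mul_one] at htangent
    exact hle_majorant.trans htangent

end IsRadialCurve

end Curves

section Hilbert

variable {H : Type*} [NormedAddCommGroup H] [InnerProductSpace ℝ H] {p σ : ℝ}

lemma isRadialCurve_sqrt (X h : H) {e : ℝ} (he : 0 < e) :
    IsRadialCurve (fun x => √(‖X + x • h‖ ^ 2 + e)) (inner ℝ X h) (‖h‖ ^ 2) := by
  have hpos (x : ℝ) : 0 < ‖X + x • h‖ ^ 2 + e := by positivity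
  have hexpand (x : ℝ) :
      ‖X + x • h‖ ^ 2 = ‖X‖ ^ 2 + 2 * x * inner ℝ X h + ‖h‖ ^ 2 * x ^ 2 := by
    rw [norm_add_sq_real, inner_smul_right, norm_smul, mul_pow, Real.norm_eq_abs, sq_abs]; ring
  refine ⟨fun x => Real.sqrt_pos.mpr (hpos x), fun x => ?_, fun x => ?_⟩
  · have hline : HasDerivAt (fun x : ℝ => X + x • h) h x := by
      simpa using ((hasDerivAt_id x).smul_const h).const_add X
    refine ((hline.norm_sq.add_const e).sqrt (hpos x).ne').congr_deriv ?_
    rw [inner_add_left, real_inner_smul_left, real_inner_self_eq_norm_sq,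
      mul_div_mul_left _ _ two_ne_zero, mul_comm x]
  · rw [div_pow, Real.sq_sqrt (hpos x).le, div_le_iff₀ (hpos x), hexpand]
    have hcauchy : inner ℝ X h ^ 2 ≤ ‖X‖ ^ 2 * ‖h‖ ^ 2 := by
      rw [← mul_pow, sq_le_sq, abs_of_nonneg (by positivity : 0 ≤ ‖X‖ * ‖h‖)]
      exact abs_real_inner_le_norm X h
    have : 0 ≤ ‖h‖ ^ 2 * e := by positivity
    linarith

lemma tendsto_glue {g h : ℝ → ℝ → ℝ} {a t : ℝ} (ha : 0 ≤ a) (ht : 0 ≤ t)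
    (hg : t ≤ a → ContinuousAt (fun q : ℝ × ℝ => g q.1 q.2) (a, t))
    (hh : a < t → ContinuousAt (fun q : ℝ × ℝ => h q.1 q.2) (a, t)) :
    Tendsto (fun e => glue g h √(a ^ 2 + e) √(t ^ 2 + e)) (𝓝[>] 0) (𝓝 (glue g h a t)) := by
  have hsqrt (b : ℝ) (hb : 0 ≤ b) : Tendsto (fun e => √(b ^ 2 + e)) (𝓝[>] 0) (𝓝 b) := by
    have hcont : Continuous fun e => √(b ^ 2 + e) := by fun_prop
    simpa [Real.sqrt_sq hb] using (hcont.tendsto 0).mono_left nhdsWithin_le_nhds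
  have hpair : Tendsto (fun e => (√(a ^ 2 + e), √(t ^ 2 + e))) (𝓝[>] 0) (𝓝 (a, t)) :=
    (hsqrt a ha).prodMk_nhds (hsqrt t ht)
  have hcone : ∀ᶠ e in 𝓝[>] (0 : ℝ), (√(t ^ 2 + e) ≤ √(a ^ 2 + e) ↔ t ≤ a) := by
    filter_upwards [self_mem_nhdsWithin] with e he
    rw [Real.sqrt_le_sqrt_iff (add_nonneg (sq_nonneg a) (mem_Ioi.mp he).le),
      add_le_add_iff_right, sq_le_sq₀ ht ha]
  rcases le_or_gt t a with hta | hat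
  · rw [glue, if_pos hta]
    refine ((hg hta).tendsto.comp hpair).congr' ?_
    filter_upwards [hcone] with e he
    exact (if_pos (he.mpr hta)).symm
  · rw [glue, if_neg hat.not_ge]
    refine ((hh hat).tendsto.comp hpair).congr' ?_
    filter_upwards [hcone] with e he
    exact (if_neg fun h => hat.not_ge (he.mp h)).symm

lemma tendsto_value (hp : 1 ≤ p) {a t : ℝ} (ha : 0 ≤ a) (ht : 0 ≤ t) :
    Tendsto (fun e => value p √(a ^ 2 + e) √(t ^ 2 + e)) (𝓝[>] 0) (𝓝 (value p a t)) :=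
  tendsto_glue ha ht (fun _ => (continuous_gain (by linarith)).continuousAt)
    fun _ => (continuous_majorant hp).continuousAt

lemma continuousAt_rpow_mul_const {r b m : ℝ} (hm : b = 0 → m = 0) :
    ContinuousAt (fun x : ℝ => x ^ r * m) b := by
  rcases eq_or_ne b 0 with hb | hb
  · simpa only [hm hb, mul_zero] using continuousAt_const
  · exact (Real.continuousAt_rpow_const b r (Or.inl hb)).mul_const m

lemma tendsto_valueSlope (hp : 1 < p) {a t m n : ℝ} (ha : 0 ≤ a) (ht : 0 ≤ t)
    (hm : a = 0 → m = 0) (hn : t = 0 → n = 0) :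
    Tendsto (fun e => valueSlope p m n √(a ^ 2 + e) √(t ^ 2 + e)) (𝓝[>] 0)
      (𝓝 (valueSlope p m n a t)) := by
  refine tendsto_glue ha ht (fun _ => ?_) fun hat => ?_
  · exact continuousAt_const.mul
      (((continuousAt_rpow_mul_const hn).comp (x := (a, t)) continuousAt_snd).sub
        ((continuousAt_rpow_mul_const hm).comp (x := (a, t)) continuousAt_fst))
  · have ht0 : t ≠ 0 := (ha.trans_lt hat).ne'
    have hτ0 : contact p a t ≠ 0 := (contact_pos hp ha ht (Or.inr (ha.trans_lt hat))).ne'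
    have hcontact : ContinuousAt (fun q : ℝ × ℝ => contact p q.1 q.2) (a, t) := by
      unfold contact; fun_prop
    have hratio : ContinuousAt (fun q : ℝ × ℝ => q.1 / q.2) (a, t) :=
      continuousAt_fst.div continuousAt_snd ht0
    exact (continuousAt_const.mul (hcontact.rpow_const (Or.inl hτ0))).mul
      (((continuousAt_const.sub (continuousAt_const.mul hratio)).mul continuousAt_const).sub
        continuousAt_const)

lemma mul_value_norm_add_le (hp : 1 < p) (hσ : 0 ≤ σ * (p - 2)) {X h Y k : H}
    (hhk : σ * ((p - 1) ^ 2 * ‖k‖ ^ 2) ≤ σ * ‖h‖ ^ 2) :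
    σ * value p ‖X + h‖ ‖Y + k‖ ≤
      σ * value p ‖X‖ ‖Y‖ + σ * valueSlope p (inner ℝ X h) (inner ℝ Y k) ‖X‖ ‖Y‖ := by
  have hinner (Z l : H) (hZ : ‖Z‖ = 0) : inner ℝ Z l = 0 := by
    rw [norm_eq_zero.mp hZ, inner_zero_left]
  refine le_of_tendsto_of_tendsto
    ((tendsto_value hp.le (norm_nonneg _) (norm_nonneg _)).const_mul σ)
    (((tendsto_value hp.le (norm_nonneg _) (norm_nonneg _)).const_mul σ).add
      ((tendsto_valueSlope hp (norm_nonneg _) (norm_nonneg _) (hinner X h)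
        (hinner Y k)).const_mul σ)) ?_
  filter_upwards [self_mem_nhdsWithin] with e he
  simpa only [one_smul, zero_smul, add_zero] using
    (isRadialCurve_sqrt X h he).mul_value_le hp hσ (isRadialCurve_sqrt Y k he) hhk

lemma valueSlope_eq_add (m n a t : ℝ) :
    valueSlope p m n a t = valueSlope p 1 0 a t * m + valueSlope p 0 1 a t * n := by
  simp only [valueSlope, glue, gainSlope, majorantSlope]
  split_ifs <;> ring

theorem exists_linearMap_mul_value_le (hp : 1 < p) (hσ : 0 ≤ σ * (p - 2)) (w : H × H) :
    ∃ L : H × H →ₗ[ℝ] ℝ, ∀ d : H × H, σ * ‖d.2‖ ^ 2 ≤ σ * ‖d.1‖ ^ 2 →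
      σ * value p ((p - 1) * ‖(w + d).1‖) ‖(w + d).2‖ ≤
        σ * value p ((p - 1) * ‖w.1‖) ‖w.2‖ + L d := by
  have hscale (x : H) : (p - 1) * ‖x‖ = ‖(p - 1) • x‖ := by
    rw [norm_smul, Real.norm_of_nonneg (by linarith)]
  set X : H := (p - 1) • w.1 with hX
  refine ⟨(σ * valueSlope p 1 0 ‖X‖ ‖w.2‖ * (p - 1)) • (innerₛₗ ℝ X ∘ₗ LinearMap.fst ℝ H H) +
    (σ * valueSlope p 0 1 ‖X‖ ‖w.2‖) • (innerₛₗ ℝ w.2 ∘ₗ LinearMap.snd ℝ H H), fun d hd => ?_⟩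
  have hcond : σ * ((p - 1) ^ 2 * ‖d.2‖ ^ 2) ≤ σ * ‖(p - 1) • d.1‖ ^ 2 := by
    rw [← hscale]
    linarith [mul_le_mul_of_nonneg_left hd (sq_nonneg (p - 1))]
  have hline := mul_value_norm_add_le hp hσ (X := X) (Y := w.2) hcond
  rw [hX, ← smul_add, ← hX, valueSlope_eq_add, inner_smul_right] at hline
  simp only [hscale, ← hX, Prod.fst_add, Prod.snd_add, LinearMap.add_apply, LinearMap.smul_apply,
    LinearMap.comp_apply, LinearMap.fst_apply, LinearMap.snd_apply,
    innerₛₗ_apply_apply, smul_eq_mul]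
  linarith

end Hilbert

section FixedPoint

lemma gain_scaled {p s y : ℝ} (hp : 1 ≤ p) (hs : 0 ≤ s) :
    gain p ((p - 1) * s) y = y ^ p - (p - 1) ^ p * s ^ p := by
  rw [gain, Real.mul_rpow (sub_nonneg.mpr hp) hs]

lemma majorant_scaled {p s y : ℝ} (hp : 1 ≤ p) (hs : 0 ≤ s) (hy : 0 ≤ y) :
    majorant p ((p - 1) * s) y =
      p * (1 - 1 / p) ^ (p - 1) * (y - (p - 1) * s) * (s + y) ^ (p - 1) := by
  have hcontact : contact p ((p - 1) * s) y = (1 - 1 / p) * (s + y) := by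
    rw [contact]; field_simp
  have hratio : 0 ≤ 1 - 1 / p := sub_nonneg.mpr (div_le_one_of_le₀ hp (by linarith))
  rw [majorant, hcontact, Real.mul_rpow hratio (add_nonneg hs hy)]
  ring

lemma max_conjugate_of_two_le {p : ℝ} (hp : 2 ≤ p) : max p (p / (p - 1)) = p :=
  max_eq_left (div_le_self (by linarith) (by linarith))

lemma max_conjugate_sub_one_of_le_two {p : ℝ} (hp : 1 < p) (hp2 : p ≤ 2) :
    max p (p / (p - 1)) - 1 = (p - 1)⁻¹ := by
  have hp1 : 0 < p - 1 := sub_pos.mpr hp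
  rw [max_eq_right (le_div_self (by linarith) hp1 (by linarith))]
  field_simp
  ring

lemma neg_mul_gain_scaled {p q s y : ℝ} (hp : 1 < p) (hq : q - 1 = (p - 1)⁻¹) (hy : 0 ≤ y) :
    -(q - 1) ^ p * gain p ((p - 1) * y) s = y ^ p - (q - 1) ^ p * s ^ p := by
  have hp1 : 0 < p - 1 := sub_pos.mpr hp
  have hunit : (q - 1) ^ p * (p - 1) ^ p = 1 := by
    rw [hq, ← Real.mul_rpow (inv_nonneg.mpr hp1.le) hp1.le, inv_mul_cancel₀ hp1.ne', Real.one_rpow]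
  rw [gain_scaled hp.le hy]
  linear_combination y ^ p * hunit

lemma neg_mul_majorant_scaled {p q s y : ℝ} (hp : 1 < p) (hq : q - 1 = (p - 1)⁻¹) (hs : 0 ≤ s)
    (hy : 0 ≤ y) : -(q - 1) ^ p * majorant p ((p - 1) * y) s =
      p * (1 - 1 / q) ^ (p - 1) * (y - (q - 1) * s) * (s + y) ^ (p - 1) := by
  have hp1 : 0 < p - 1 := sub_pos.mpr hp
  have hκ : 0 < q - 1 := by rw [hq]; positivity
  have hκp : (q - 1) * (p - 1) = 1 := by rw [hq, inv_mul_cancel₀ hp1.ne']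
  have hratio : 1 - 1 / q = (q - 1) * (1 - 1 / p) := by
    have hq0 : q ≠ 0 := by linarith
    field_simp
    linear_combination -hκp
  have hratio_nonneg : 0 ≤ 1 - 1 / p := sub_nonneg.mpr (div_le_one_of_le₀ hp.le (by linarith))
  have hpow : (q - 1) ^ p = (q - 1) ^ (p - 1) * (q - 1) := by
    rw [← Real.rpow_add_one hκ.ne', sub_add_cancel]
  rw [majorant_scaled hp.le hy hs, hratio, Real.mul_rpow hκ.le hratio_nonneg, hpow, add_comm s y]
  linear_combination (q - 1) ^ (p - 1) * p * (1 - 1 / p) ^ (p - 1) * y * (y + s) ^ (p - 1) * hκp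

variable {H : Type*} [NormedAddCommGroup H] [InnerProductSpace ℝ H] {p σ : ℝ}
  {f u : Option (H × H) → EReal}

theorem iSup_iterate_Aop_burkPhi_eq_mul_value (hp : 2 ≤ p) (hσ : 0 ≤ σ)
    (hf_none : f none = ⊥) (hu_none : u none = ⊥)
    (hf : ∀ w, f (some w) = (σ * gain p ((p - 1) * ‖w.1‖) ‖w.2‖ : ℝ))
    (hu : ∀ w, u (some w) = (σ * value p ((p - 1) * ‖w.1‖) ‖w.2‖ : ℝ)) :
    ⨆ n, (Aop burkPhi)^[n] f = u := by
  have hp1 : 1 < p := by linarith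
  have hσp : 0 ≤ σ * (p - 2) := mul_nonneg hσ (sub_nonneg.mpr hp)
  refine iSup_iterate_Aop_burkPhi_eq hf_none hu_none hf hu
    (fun w => mul_gain_le_mul_value hp1 hσp
      (mul_nonneg (sub_pos.mpr hp1).le (norm_nonneg _)) (norm_nonneg _))
    (fun w => ?_) fun V hFV hV => value_norm_le_of_zigzagConcave hp1 hV hFV
  obtain ⟨L, hL⟩ := exists_linearMap_mul_value_le hp1 hσp w
  exact ⟨L, fun d hd => hL d (by gcongr)⟩

theorem iSup_iterate_Aop_burkPhi_eq_mul_value_swap (hp : 1 < p) (hp2 : p ≤ 2) (hσ : σ ≤ 0)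
    (hf_none : f none = ⊥) (hu_none : u none = ⊥)
    (hf : ∀ w, f (some w) = (σ * gain p ((p - 1) * ‖w.2‖) ‖w.1‖ : ℝ))
    (hu : ∀ w, u (some w) = (σ * value p ((p - 1) * ‖w.2‖) ‖w.1‖ : ℝ)) :
    ⨆ n, (Aop burkPhi)^[n] f = u := by
  have hσp : 0 ≤ σ * (p - 2) := mul_nonneg_of_nonpos_of_nonpos hσ (sub_nonpos.mpr hp2)
  refine iSup_iterate_Aop_burkPhi_eq hf_none hu_none hf hu
    (fun w => mul_gain_le_mul_value hp hσp
      (mul_nonneg (sub_pos.mpr hp).le (norm_nonneg _)) (norm_nonneg _))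
    (fun w => ?_) fun V hFV hV w =>
      value_norm_le_of_zigzagConcave hp hV.swap (fun w => hFV w.swap) w.swap
  obtain ⟨L, hL⟩ := exists_linearMap_mul_value_le hp hσp w.swap
  refine ⟨L ∘ₗ (LinearEquiv.prodComm ℝ H H).toLinearMap, fun d hd => hL d.swap ?_⟩
  exact mul_le_mul_of_nonpos_left (pow_le_pow_left₀ (norm_nonneg _) hd 2) hσ

end FixedPoint

end Burkholder

/-- Burkholder's function: with `p* = max(p, p/(p-1))`,
`f(Δ) = -∞`, `f(x₁,x₂) = |x₂|^p - (p*-1)^p |x₁|^p`, and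
`ũ(x₁,x₂) = p(1-1/p*)^{p-1}(|x₂| - (p*-1)|x₁|)(|x₁|+|x₂|)^{p-1}`, the minimal fixed
point of `A` dominating `f` (i.e. `A^∞f = lim_n Aⁿf`) equals `u`, where for `1 < p ≤ 2`
`u = ũ` on `{|x₂| ≤ (p*-1)|x₁|}` and `u = f` on `{|x₂| > (p*-1)|x₁|}` (and `u(Δ) = -∞`),
while for `2 ≤ p < ∞` the same holds with `ũ` and `f` interchanged. -/
theorem burkholder_minimal_fixed_point {H : Type*} [NormedAddCommGroup H]
    [InnerProductSpace ℝ H] (p : ℝ) (hp : 1 < p)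
    (f utilde u : Option (H × H) → EReal)
    (hfΔ : f none = ⊥)
    (hf : ∀ w : H × H, f (some w) =
      ((‖w.2‖ ^ p - (max p (p / (p - 1)) - 1) ^ p * ‖w.1‖ ^ p : ℝ) : EReal))
    (hutildeΔ : utilde none = ⊥)
    (hutilde : ∀ w : H × H, utilde (some w) =
      ((p * (1 - 1 / max p (p / (p - 1))) ^ (p - 1) *
        (‖w.2‖ - (max p (p / (p - 1)) - 1) * ‖w.1‖) * (‖w.1‖ + ‖w.2‖) ^ (p - 1) : ℝ) : EReal))
    (huΔ : u none = ⊥)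
    (hu_le : p ≤ 2 → ∀ w : H × H, u (some w) =
      if ‖w.2‖ ≤ (max p (p / (p - 1)) - 1) * ‖w.1‖ then utilde (some w) else f (some w))
    (hu_ge : 2 ≤ p → ∀ w : H × H, u (some w) =
      if ‖w.2‖ ≤ (max p (p / (p - 1)) - 1) * ‖w.1‖ then f (some w) else utilde (some w)) :
    ∀ z : Option (H × H), (⨆ n : ℕ, (Aop burkPhi)^[n] f z) = u z := by
  intro z
  rw [← iSup_apply]
  refine congrFun ?_ z
  rcases le_total 2 p with hp2 | hp2
  · simp only [Burkholder.max_conjugate_of_two_le hp2,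
      ← Burkholder.gain_scaled hp.le (norm_nonneg _),
      ← Burkholder.majorant_scaled hp.le (norm_nonneg _) (norm_nonneg _)] at hf hutilde hu_ge
    refine Burkholder.iSup_iterate_Aop_burkPhi_eq_mul_value hp2 zero_le_one hfΔ huΔ
      (fun w => by rw [hf, one_mul]) fun w => ?_
    rw [hu_ge hp2, one_mul]
    split_ifs with hw
    · rw [hf, Burkholder.value_of_le hw]
    · rw [hutilde, Burkholder.value_of_ge (not_le.mp hw).le]
  · have hq := Burkholder.max_conjugate_sub_one_of_le_two hp hp2
    have hp1 : 0 < p - 1 := sub_pos.mpr hp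
    simp only [← Burkholder.neg_mul_gain_scaled hp hq (norm_nonneg _),
      ← Burkholder.neg_mul_majorant_scaled hp hq (norm_nonneg _) (norm_nonneg _)] at hf hutilde
    refine Burkholder.iSup_iterate_Aop_burkPhi_eq_mul_value_swap hp hp2 (neg_nonpos.mpr
      (Real.rpow_nonneg (hq ▸ inv_nonneg.mpr hp1.le) p)) hfΔ huΔ hf fun w => ?_
    rw [hu_le hp2]
    split_ifs with hw <;> rw [hq, le_inv_mul_iff₀ hp1] at hw
    · rw [hutilde, Burkholder.value_of_ge hw]
    · rw [hf, Burkholder.value_of_le (not_le.mp hw).le]
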